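/- Let f be C³-smooth on an open neighbourhood of S^{n-1}. Then for every θ ∈ S^{n-1} and every v ∈ ℝ^n, Δ_S φ_v(θ) − ⟨∇_S (Δ_S f)(θ), v⟩ = (n−3) ⟨∇_S f(θ), v⟩ − 2 ⟨v,θ⟩ Δ_S f(θ), where φ_v is the function θ ↦ ⟨∇_S f(θ), v⟩ on S^{n-1}. -/

import Mathlib

open MeasureTheory Metric Filter
open scoped RealInnerProductSpace ENNReal NNReal

noncomputable section

namespace SecondOrderConc

/-- Euclidean space ℝⁿ. -/
abbrev E (n : ℕ) : Type := EuclideanSpace ℝ (Fin n)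

/-- The uniform (normalized rotation-invariant) probability measure `σ_{n-1}`
on the unit sphere `S^{n-1}`, viewed as a measure on the ambient space ℝⁿ. -/
def sphMeasure (n : ℕ) : Measure (E n) :=
  ((((volume : Measure (E n)).toSphere).map Subtype.val) Set.univ)⁻¹ •
    (((volume : Measure (E n)).toSphere).map Subtype.val)

variable {n : ℕ}

/-- Euclidean Hessian of `f` at `x`, as a continuous linear operator on ℝⁿ. -/
def hess (f : E n → ℝ) (x : E n) : E n →L[ℝ] E n :=
  fderiv ℝ (gradient f) x

/-- Squared Hilbert–Schmidt norm of an operator on ℝⁿ. -/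
def hsNormSq (A : E n →L[ℝ] E n) : ℝ :=
  ∑ i : Fin n, ‖A (EuclideanSpace.single i 1)‖ ^ 2

/-- Orthogonal projection of ℝⁿ onto `θ^⊥` (for a unit vector `θ`). -/
def projPerp (θ : E n) : E n →L[ℝ] E n :=
  ContinuousLinearMap.id ℝ (E n) - (innerSL ℝ θ).smulRight θ

/-- Spherical gradient `∇_S f(θ) = ∇f(θ) − ⟨∇f(θ),θ⟩θ`. -/
def sgrad (f : E n → ℝ) (θ : E n) : E n :=
  gradient f θ - ⟪gradient f θ, θ⟫ • θ

/-- Spherical Hessian `f''_S(θ) = P_{θ^⊥} (f''(θ) − ⟨∇f(θ),θ⟩ I_n) P_{θ^⊥}`. -/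
def sHess (f : E n → ℝ) (θ : E n) : E n →L[ℝ] E n :=
  (projPerp θ).comp
    ((hess f θ - ⟪gradient f θ, θ⟫ • ContinuousLinearMap.id ℝ (E n)).comp (projPerp θ))

/-- Spherical Laplacian `Δ_S f(θ) = Tr f''_S(θ)`. -/
def sLap (f : E n → ℝ) (θ : E n) : ℝ :=
  LinearMap.trace ℝ (E n) (sHess f θ).toLinearMap

/-- Euclidean Laplacian `Δ f = Tr f''`. -/
def eLap (f : E n → ℝ) (x : E n) : ℝ :=
  LinearMap.trace ℝ (E n) (hess f x).toLinearMap

/-- 0-homogeneous extension to `ℝⁿ \ {0}` of (the restriction to the sphere of) `g`. -/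
def ext0 (g : E n → ℝ) : E n → ℝ := fun x => g (‖x‖⁻¹ • x)

/-! Both sides are read off the 0-homogeneous extension `F` of `f`. It satisfies `∇F = ∇_S f` and
`ΔF = Δ_S f` on the sphere, so `φ_v` is the restriction of `∂_v F`, which is (-1)-homogeneous, and
`Δ_S f` is the restriction of `ΔF`, which is (-2)-homogeneous. For a `k`-homogeneous `g`, Euler's
identity gives `Δ_S g = Δg - k (n + k - 2) g` and `∇_S g = ∇g - k g θ` on the sphere. Apply the
former with `k = -1` to `∂_v F`, the latter with `k = -2` to `ΔF`, and use `Δ ∂_v F = ∂_v ΔF`. -/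

open scoped Topology

section PosHomogeneous

section Module

variable {V W W' : Type*} [SMul ℝ V] [AddCommGroup W] [Module ℝ W] [AddCommGroup W'] [Module ℝ W']

/-- Positive homogeneity of integer degree `k`, used for the 0-homogeneous extension and its
derivatives. The origin is included, so `g 0 = 0` when `k ≠ 0`; where `g` is not differentiable at
the origin, its `fderiv` satisfies this because the junk value is `0`. -/
def PosHomogeneous (k : ℤ) (g : V → W) : Prop :=
  ∀ t : ℝ, 0 < t → ∀ x, g (t • x) = t ^ k • g x

theorem PosHomogeneous.linearMap_comp {k : ℤ} {g : V → W} (hg : PosHomogeneous k g)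
    (L : W →ₗ[ℝ] W') : PosHomogeneous k fun x => L (g x) := fun t ht x => by
  simp only [hg t ht, map_smul]

end Module

variable {V W : Type*} [NormedAddCommGroup V] [NormedSpace ℝ V] [NormedAddCommGroup W]
  [NormedSpace ℝ W]

protected theorem PosHomogeneous.fderiv {k : ℤ} {g : V → W} (hg : PosHomogeneous k g) :
    PosHomogeneous (k - 1) (fderiv ℝ g) := fun t ht x => by
  have h : t • fderiv ℝ g (t • x) = t ^ k • fderiv ℝ g x := by
    rw [← fderiv_comp_smul, funext (hg t ht)]
    exact congr($(fderiv_const_smul_field (f := g) (t ^ k)) x)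
  rw [zpow_sub_one₀ ht.ne', mul_comm, mul_smul, ← h, inv_smul_smul₀ ht.ne']

theorem PosHomogeneous.fderiv_apply_self {k : ℤ} {g : V → W} {x : V} (hg : PosHomogeneous k g)
    (hgx : DifferentiableAt ℝ g x) : fderiv ℝ g x x = (k : ℝ) • g x := by
  have hray : HasDerivAt (fun t : ℝ => t • x) x 1 := by
    simpa using (hasDerivAt_id (1 : ℝ)).smul_const x
  have hchain : HasDerivAt (fun t : ℝ => g (t • x)) (fderiv ℝ g x x) 1 :=
    HasFDerivAt.comp_hasDerivAt 1 (by simpa using hgx.hasFDerivAt) hray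
  have hpow : HasDerivAt (fun t : ℝ => t ^ k • g x) ((k : ℝ) • g x) 1 := by
    simpa using (hasDerivAt_zpow k (1 : ℝ) (.inl one_ne_zero)).smul_const (g x)
  refine hchain.unique (hpow.congr_of_eventuallyEq ?_)
  filter_upwards [lt_mem_nhds one_pos] with t ht using hg t ht x

end PosHomogeneous

section Trace

variable {V : Type*} [NormedAddCommGroup V] [NormedSpace ℝ V] [FiniteDimensional ℝ V]

variable (V) in
/-- The trace as a continuous linear functional on operators, so that it can be differentiated
through. -/
def traceCLM : (V →L[ℝ] V) →L[ℝ] ℝ :=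
  LinearMap.toContinuousLinearMap (LinearMap.trace ℝ V ∘ₗ ContinuousLinearMap.coeLM ℝ)

theorem traceCLM_smulRight (a : V →L[ℝ] ℝ) (x : V) : traceCLM V (a.smulRight x) = a x :=
  LinearMap.trace_smulRight _ _

theorem traceCLM_id : traceCLM V (ContinuousLinearMap.id ℝ V) = Module.finrank ℝ V := by
  simp [traceCLM]

theorem traceCLM_comp_comm (A B : V →L[ℝ] V) : traceCLM V (A.comp B) = traceCLM V (B.comp A) :=
  LinearMap.trace_mul_comm ℝ (A : V →ₗ[ℝ] V) B

end Trace

section Normalize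

variable {V : Type*} [NormedAddCommGroup V] [InnerProductSpace ℝ V] {θ x : V}

theorem hasFDerivAt_norm_inv (hθ : ‖θ‖ = 1) :
    HasFDerivAt (fun y : V => ‖y‖⁻¹) (-innerSL ℝ θ) θ := by
  have hnorm : HasFDerivAt (fun y : V => √(‖y‖ ^ 2)) (innerSL ℝ θ) θ := by
    refine ((hasStrictFDerivAt_norm_sq θ).hasFDerivAt.sqrt (by simp [hθ])).congr_fderiv ?_
    ext1 w
    simp [hθ]
  simp only [Real.sqrt_sq (norm_nonneg _)] at hnorm
  simpa [hθ] using! (hasDerivAt_inv (by simp [hθ])).comp_hasFDerivAt θ hnorm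

theorem contDiffAt_normalize {m : WithTop ℕ∞} (hx : x ≠ 0) :
    ContDiffAt ℝ m NormedSpace.normalize x :=
  ((contDiffAt_norm ℝ hx).inv (norm_ne_zero_iff.2 hx)).smul contDiffAt_id

theorem eventually_normalize {p : V → Prop} (hθ : ‖θ‖ = 1) (hp : ∀ᶠ y in 𝓝 θ, p y) :
    ∀ᶠ y in 𝓝 θ, p (NormedSpace.normalize y) := by
  have hθ0 : θ ≠ 0 := ne_zero_of_norm_ne_zero (by simp [hθ])
  have hcont : Tendsto NormedSpace.normalize (𝓝 θ) (𝓝 (NormedSpace.normalize θ)) :=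
    (contDiffAt_normalize (m := 0) hθ0).continuousAt
  rw [NormedSpace.normalize_eq_self_of_norm_eq_one hθ] at hcont
  exact hcont.eventually hp

end Normalize

section Gradient

variable {V : Type*} [NormedAddCommGroup V] [InnerProductSpace ℝ V] [CompleteSpace V] {f : V → ℝ}

theorem contDiffAt_gradient {m m' : WithTop ℕ∞} {x : V} (hf : ContDiffAt ℝ m' f x)
    (hm : m + 1 ≤ m') : ContDiffAt ℝ m (gradient f) x := by
  have hdual : IsBoundedLinearMap ℝ (InnerProductSpace.toDual ℝ V).symm :=
    { map_add := map_add _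
      map_smul := by simp
      bound := ⟨1, one_pos, by simp⟩ }
  exact hdual.contDiff.contDiffAt.comp x (hf.fderiv_right hm)

protected theorem PosHomogeneous.gradient {k : ℤ} (hf : PosHomogeneous k f) :
    PosHomogeneous (k - 1) (gradient f) := fun t ht x => by
  refine ext_inner_right ℝ fun w => ?_
  simp [inner_smul_left, inner_gradient_left, hf.fderiv t ht]

end Gradient

section Hessian

variable {f : E n → ℝ} {x : E n}

theorem contDiffAt_hess {m m' : WithTop ℕ∞} (hf : ContDiffAt ℝ m' f x) (hm : m + 2 ≤ m') :
    ContDiffAt ℝ m (hess f) x :=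
  (contDiffAt_gradient (m := m + 1) hf (by rwa [add_assoc, one_add_one_eq_two])).fderiv_right le_rfl

theorem hasFDerivAt_gradient (hf : ContDiffAt ℝ 2 f x) :
    HasFDerivAt (gradient f) (hess f x) x :=
  ((contDiffAt_gradient (m := 1) hf (by norm_num)).differentiableAt one_ne_zero).hasFDerivAt

theorem inner_hess_comm (hf : ContDiffAt ℝ 2 f x) (u w : E n) :
    ⟪hess f x u, w⟫ = ⟪hess f x w, u⟫ := by
  have hD : DifferentiableAt ℝ (fderiv ℝ f) x :=
    (hf.fderiv_right (m := 1) (by norm_num)).differentiableAt one_ne_zero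
  have hrepr (u w : E n) : ⟪hess f x u, w⟫ = fderiv ℝ (fderiv ℝ f) x u w := by
    have hl := (hasFDerivAt_gradient hf).inner ℝ (hasFDerivAt_const w x)
    have hr := hD.hasFDerivAt.clm_apply (hasFDerivAt_const w x)
    simp only [inner_gradient_left] at hl
    simpa [fderivInnerCLM_apply] using congr($(hl.unique hr) u)
  rw [hrepr, hrepr, (hf.isSymmSndFDerivAt (by simp)).eq]

theorem gradient_inner_gradient (hf : ContDiffAt ℝ 2 f x) (v : E n) :
    gradient (fun y => ⟪gradient f y, v⟫) x = hess f x v := by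
  refine ext_inner_right ℝ fun w => ?_
  rw [inner_gradient_left, ((hasFDerivAt_gradient hf).inner ℝ (hasFDerivAt_const v x)).fderiv,
    inner_hess_comm hf]
  simp [fderivInnerCLM_apply]

theorem hess_inner_gradient (hf : ContDiffAt ℝ 3 f x) (v : E n) :
    hess (fun y => ⟪gradient f y, v⟫) x = fderiv ℝ (hess f) x v := by
  have hgrad : gradient (fun y => ⟪gradient f y, v⟫) =ᶠ[𝓝 x] fun y => hess f y v := by
    filter_upwards [hf.eventually (by simp)] with y hy
    exact gradient_inner_gradient (hy.of_le (by norm_num)) v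
  have hH : DifferentiableAt ℝ (hess f) x :=
    (contDiffAt_hess (m := 1) hf (by norm_num)).differentiableAt one_ne_zero
  have hsymm : IsSymmSndFDerivAt ℝ (gradient f) x :=
    (contDiffAt_gradient (m := 2) hf (by norm_num)).isSymmSndFDerivAt (by simp)
  ext1 w
  rw [hess, hgrad.fderiv_eq, (hH.hasFDerivAt.clm_apply (hasFDerivAt_const v x)).fderiv]
  simpa using! hsymm.eq w v

theorem eLap_eq_traceCLM (f : E n → ℝ) (x : E n) : eLap f x = traceCLM (E n) (hess f x) := rfl

theorem sLap_eq_traceCLM (f : E n → ℝ) (θ : E n) : sLap f θ = traceCLM (E n) (sHess f θ) := rfl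

theorem differentiableAt_eLap (hf : ContDiffAt ℝ 3 f x) : DifferentiableAt ℝ (eLap f) x :=
  (traceCLM (E n)).differentiableAt.comp x
    ((contDiffAt_hess (m := 1) hf (by norm_num)).differentiableAt one_ne_zero)

theorem eLap_inner_gradient (hf : ContDiffAt ℝ 3 f x) (v : E n) :
    eLap (fun y => ⟪gradient f y, v⟫) x = ⟪gradient (eLap f) x, v⟫ := by
  have hH : DifferentiableAt ℝ (hess f) x :=
    (contDiffAt_hess (m := 1) hf (by norm_num)).differentiableAt one_ne_zero
  have hderiv : HasFDerivAt (eLap f) ((traceCLM (E n)).comp (fderiv ℝ (hess f) x)) x :=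
    (traceCLM (E n)).hasFDerivAt.comp x hH.hasFDerivAt
  rw [inner_gradient_left, hderiv.fderiv, eLap_eq_traceCLM, hess_inner_gradient hf,
    ContinuousLinearMap.comp_apply]

protected theorem PosHomogeneous.eLap {k : ℤ} (hf : PosHomogeneous k f) :
    PosHomogeneous (k - 2) (eLap f) := by
  have h := hf.gradient.fderiv.linearMap_comp (traceCLM (E n)).toLinearMap
  rwa [sub_sub, one_add_one_eq_two] at h

end Hessian

section Sphere

variable {f g : E n → ℝ} {θ x : E n} {k : ℤ}

theorem projPerp_apply (θ w : E n) : projPerp θ w = w - ⟪θ, w⟫ • θ := rfl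

theorem inner_projPerp_left (θ u w : E n) : ⟪projPerp θ u, w⟫ = ⟪u, projPerp θ w⟫ := by
  simp only [projPerp_apply, inner_sub_left, inner_sub_right, real_inner_smul_left,
    real_inner_smul_right, real_inner_comm θ u]
  ring

theorem projPerp_projPerp (hθ : ‖θ‖ = 1) (w : E n) : projPerp θ (projPerp θ w) = projPerp θ w := by
  simp [projPerp_apply, inner_sub_right, real_inner_smul_right, hθ]

theorem sgrad_eq_projPerp (f : E n → ℝ) (θ : E n) : sgrad f θ = projPerp θ (gradient f θ) := by
  rw [sgrad, projPerp_apply, real_inner_comm]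

theorem sgrad_congr (h : f =ᶠ[𝓝 θ] g) : sgrad f θ = sgrad g θ := by
  rw [sgrad, sgrad, h.gradient_eq]

theorem sLap_congr (h : f =ᶠ[𝓝 θ] g) : sLap f θ = sLap g θ := by
  rw [sLap, sLap, sHess, sHess, hess, hess, h.gradient_eq, h.gradient.fderiv_eq]

theorem traceCLM_projPerp (hθ : ‖θ‖ = 1) : traceCLM (E n) (projPerp θ) = n - 1 := by
  simp [projPerp, traceCLM_id, traceCLM_smulRight, hθ]

theorem sLap_eq_eLap_sub (f : E n → ℝ) (hθ : ‖θ‖ = 1) :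
    sLap f θ = eLap f θ - ⟪hess f θ θ, θ⟫ - (n - 1) * ⟪gradient f θ, θ⟫ := by
  set c := ⟪gradient f θ, θ⟫
  have hidem : (projPerp θ).comp (projPerp θ) = projPerp θ :=
    ContinuousLinearMap.ext (projPerp_projPerp hθ)
  have hcomp : (hess f θ - c • ContinuousLinearMap.id ℝ (E n)).comp (projPerp θ) =
      hess f θ - (innerSL ℝ θ).smulRight (hess f θ θ) - c • projPerp θ := by
    ext1 w
    simp [projPerp_apply]
  rw [sLap_eq_traceCLM, sHess, traceCLM_comp_comm, ContinuousLinearMap.comp_assoc, hidem, hcomp,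
    map_sub, map_sub, map_smul, traceCLM_smulRight, traceCLM_projPerp hθ, eLap_eq_traceCLM,
    innerSL_apply_apply, real_inner_comm θ, smul_eq_mul, mul_comm c]

protected theorem PosHomogeneous.sgrad_eq (hg : PosHomogeneous k g) (hgθ : DifferentiableAt ℝ g θ) :
    sgrad g θ = gradient g θ - (k * g θ) • θ := by
  rw [sgrad, inner_gradient_left, hg.fderiv_apply_self hgθ, smul_eq_mul]

protected theorem PosHomogeneous.sLap_eq (hg : PosHomogeneous k g) (hθ : ‖θ‖ = 1)
    (hgθ : ContDiffAt ℝ 2 g θ) : sLap g θ = eLap g θ - k * (n + k - 2) * g θ := by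
  have hgrad : ⟪gradient g θ, θ⟫ = k * g θ := by
    rw [inner_gradient_left, hg.fderiv_apply_self (hgθ.differentiableAt two_ne_zero), smul_eq_mul]
  have hhess : ⟪hess g θ θ, θ⟫ = (k - 1) * (k * g θ) := by
    rw [hess, hg.gradient.fderiv_apply_self (hasFDerivAt_gradient hgθ).differentiableAt,
      real_inner_smul_left, hgrad]
    push_cast
    rfl
  rw [sLap_eq_eLap_sub g hθ, hgrad, hhess]
  ring

theorem hasFDerivAt_normalize (hθ : ‖θ‖ = 1) :
    HasFDerivAt NormedSpace.normalize (projPerp θ) θ := by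
  refine ((hasFDerivAt_norm_inv hθ).smul (hasFDerivAt_id θ)).congr_fderiv ?_
  ext1 w
  simp [projPerp_apply, hθ, sub_eq_add_neg]

theorem ext0_eq_comp_normalize (g : E n → ℝ) : ext0 g = g ∘ NormedSpace.normalize := rfl

theorem ext0_ext0 (g : E n → ℝ) : ext0 (ext0 g) = ext0 g := by
  funext y
  simp [ext0_eq_comp_normalize]

theorem posHomogeneous_ext0 (g : E n → ℝ) : PosHomogeneous 0 (ext0 g) := fun t ht y => by
  simp [ext0_eq_comp_normalize, NormedSpace.normalize_smul_of_pos ht]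

theorem contDiffAt_ext0 {m : WithTop ℕ∞} (hθ : ‖θ‖ = 1) (hf : ContDiffAt ℝ m f θ) :
    ContDiffAt ℝ m (ext0 f) θ := by
  refine ContDiffAt.comp θ ?_
    (contDiffAt_normalize (ne_zero_of_norm_ne_zero (by simp [hθ])))
  simpa [hθ] using hf

theorem ext0_eventuallyEq (hθ : ‖θ‖ = 1) (h : ∀ᶠ y in 𝓝 θ, ‖y‖ = 1 → f y = g y) :
    ext0 f =ᶠ[𝓝 θ] ext0 g := by
  have hθ0 : θ ≠ 0 := ne_zero_of_norm_ne_zero (by simp [hθ])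
  filter_upwards [eventually_normalize hθ h, isOpen_ne.mem_nhds hθ0] with y hy hy0
  exact hy (NormedSpace.norm_normalize hy0)

theorem hasFDerivAt_ext0 (hθ : ‖θ‖ = 1) (hf : DifferentiableAt ℝ f θ) :
    HasFDerivAt (ext0 f) ((fderiv ℝ f θ).comp (projPerp θ)) θ := by
  refine HasFDerivAt.comp θ ?_ (hasFDerivAt_normalize hθ)
  simpa [hθ] using hf.hasFDerivAt

theorem gradient_ext0 (hθ : ‖θ‖ = 1) (hf : DifferentiableAt ℝ f θ) :
    gradient (ext0 f) θ = sgrad f θ := by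
  refine ext_inner_right ℝ fun w => ?_
  rw [inner_gradient_left, (hasFDerivAt_ext0 hθ hf).fderiv, sgrad_eq_projPerp,
    inner_projPerp_left, inner_gradient_left, ContinuousLinearMap.comp_apply]

theorem gradient_ext0_eq_smul_sgrad (hx : x ≠ 0)
    (hf : DifferentiableAt ℝ f (NormedSpace.normalize x)) :
    gradient (ext0 f) x = ‖x‖⁻¹ • sgrad f (NormedSpace.normalize x) := by
  have h := (posHomogeneous_ext0 f).gradient ‖x‖ (norm_pos_iff.2 hx) (NormedSpace.normalize x)
  rwa [NormedSpace.norm_smul_normalize, gradient_ext0 (NormedSpace.norm_normalize hx) hf,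
    zero_sub, zpow_neg_one] at h

theorem hasFDerivAt_sgrad (hf : ContDiffAt ℝ 2 f x) :
    HasFDerivAt (sgrad f) ((projPerp x).comp (hess f x) -
      ⟪gradient f x, x⟫ • ContinuousLinearMap.id ℝ (E n) -
      (innerSL ℝ (gradient f x)).smulRight x) x := by
  have hgrad := hasFDerivAt_gradient hf
  have hid := hasFDerivAt_id (𝕜 := ℝ) x
  refine (hgrad.sub ((hgrad.inner ℝ hid).smul hid)).congr_fderiv ?_
  ext1 w
  simp only [projPerp_apply, fderivInnerCLM_apply, sub_apply, add_apply, smul_apply,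
    ContinuousLinearMap.comp_apply, ContinuousLinearMap.prod_apply,
    ContinuousLinearMap.smulRight_apply, ContinuousLinearMap.id_apply, innerSL_apply_apply, id,
    real_inner_comm x]
  module

theorem hess_ext0 (hθ : ‖θ‖ = 1) (hf : ContDiffAt ℝ 2 f θ) :
    hess (ext0 f) θ = sHess f θ - (innerSL ℝ (sgrad f θ)).smulRight θ -
      (innerSL ℝ θ).smulRight (sgrad f θ) := by
  have hθ0 : θ ≠ 0 := ne_zero_of_norm_ne_zero (by simp [hθ])
  have hNθ : NormedSpace.normalize θ = θ := NormedSpace.normalize_eq_self_of_norm_eq_one hθ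
  have hgrad : gradient (ext0 f) =ᶠ[𝓝 θ] fun y => ‖y‖⁻¹ • sgrad f (NormedSpace.normalize y) := by
    filter_upwards [isOpen_ne.mem_nhds hθ0, eventually_normalize hθ (hf.eventually (by simp))]
      with y hy hfy
    exact gradient_ext0_eq_smul_sgrad hy (hfy.differentiableAt two_ne_zero)
  have hsgrad := hasFDerivAt_sgrad (hNθ.symm ▸ hf)
  have hsmul := (hasFDerivAt_norm_inv hθ).smul (hsgrad.comp θ (hasFDerivAt_normalize hθ))
  rw [hess, hgrad.fderiv_eq]
  refine hsmul.fderiv.trans ?_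
  ext1 w
  have hproj : ⟪gradient f θ, projPerp θ w⟫ = ⟪sgrad f θ, w⟫ := by
    rw [sgrad_eq_projPerp, inner_projPerp_left]
  simp [hNθ, hθ, sHess, projPerp_projPerp hθ, hproj, sub_eq_add_neg]

theorem sLap_eq_eLap_ext0 (hθ : ‖θ‖ = 1) (hf : ContDiffAt ℝ 2 f θ) :
    sLap f θ = eLap (ext0 f) θ := by
  have htangent : ⟪sgrad f θ, θ⟫ = 0 := by
    simp [sgrad, inner_sub_left, real_inner_smul_left, hθ]
  rw [eLap_eq_traceCLM, hess_ext0 hθ hf, sLap_eq_traceCLM, map_sub, map_sub, traceCLM_smulRight,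
    traceCLM_smulRight, innerSL_apply_apply, innerSL_apply_apply, real_inner_comm _ θ, htangent,
    sub_zero, sub_zero]

theorem sLap_ext0 (hθ : ‖θ‖ = 1) (hf : ContDiffAt ℝ 2 f θ) : sLap (ext0 f) θ = sLap f θ := by
  rw [sLap_eq_eLap_ext0 hθ (contDiffAt_ext0 hθ hf), ext0_ext0, sLap_eq_eLap_ext0 hθ hf]

theorem sgrad_ext0 (hθ : ‖θ‖ = 1) (hf : DifferentiableAt ℝ f θ) :
    sgrad (ext0 f) θ = sgrad f θ := by
  rw [(posHomogeneous_ext0 f).sgrad_eq (hasFDerivAt_ext0 hθ hf).differentiableAt,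
    gradient_ext0 hθ hf, Int.cast_zero, zero_mul, zero_smul, sub_zero]

theorem PosHomogeneous.sLap_inner_gradient_sub {F : E n → ℝ} {θ : E n} (hF : PosHomogeneous 0 F)
    (hθ : ‖θ‖ = 1) (hFθ : ContDiffAt ℝ 3 F θ) (v : E n) :
    sLap (fun x => ⟪gradient F x, v⟫) θ - ⟪sgrad (eLap F) θ, v⟫ =
      ((n : ℝ) - 3) * ⟪gradient F θ, v⟫ - 2 * ⟪v, θ⟫ * eLap F θ := by
  have hdir : PosHomogeneous (0 - 1) fun x => ⟪gradient F x, v⟫ := by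
    simpa only [innerₗ_apply_apply, real_inner_comm v] using
      hF.gradient.linearMap_comp (innerₗ (E n) v)
  have hdirθ : ContDiffAt ℝ 2 (fun x => ⟪gradient F x, v⟫) θ :=
    (contDiffAt_gradient hFθ (by norm_num)).inner ℝ contDiffAt_const
  rw [hdir.sLap_eq hθ hdirθ, hF.eLap.sgrad_eq (differentiableAt_eLap hFθ),
    eLap_inner_gradient hFθ, inner_sub_left, real_inner_smul_left, real_inner_comm v θ]
  push_cast
  ring

theorem sLap_sgrad_commutator_general {f : E n → ℝ} {θ : E n} (hθ : ‖θ‖ = 1)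
    (hf : ContDiffAt ℝ 3 f θ) (v : E n) :
    sLap (ext0 (fun x => ⟪sgrad f x, v⟫)) θ - ⟪sgrad (ext0 (sLap f)) θ, v⟫ =
      ((n : ℝ) - 3) * ⟪sgrad f θ, v⟫ - 2 * ⟪v, θ⟫ * sLap f θ := by
  have hF := contDiffAt_ext0 hθ hf
  have hdir : ContDiffAt ℝ 2 (fun x => ⟪gradient (ext0 f) x, v⟫) θ :=
    (contDiffAt_gradient hF (by norm_num)).inner ℝ contDiffAt_const
  have hgrad : ext0 (fun x => ⟪sgrad f x, v⟫) =ᶠ[𝓝 θ]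
      ext0 fun x => ⟪gradient (ext0 f) x, v⟫ := by
    refine ext0_eventuallyEq hθ ?_
    filter_upwards [hf.eventually (by simp)] with y hfy hy
    rw [gradient_ext0 hy (hfy.differentiableAt three_ne_zero)]
  have hlap : ext0 (sLap f) =ᶠ[𝓝 θ] ext0 (eLap (ext0 f)) := by
    refine ext0_eventuallyEq hθ ?_
    filter_upwards [hf.eventually (by simp)] with y hfy hy
    exact sLap_eq_eLap_ext0 hy (hfy.of_le (by norm_num))
  rw [sLap_congr hgrad, sLap_ext0 hθ hdir, sgrad_congr hlap,
    sgrad_ext0 hθ (differentiableAt_eLap hF),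
    ← gradient_ext0 hθ (hf.differentiableAt three_ne_zero),
    sLap_eq_eLap_ext0 hθ (hf.of_le (by norm_num))]
  exact (posHomogeneous_ext0 f).sLap_inner_gradient_sub hθ hF v

end Sphere

/-- **Lemma 4.3 (Statement 10).** Commutator of the spherical Laplacian and gradient. -/
theorem sLap_sgrad_commutator
    {n : ℕ} (hn : 2 ≤ n) (f : E n → ℝ) (U : Set (E n)) (hU : IsOpen U)
    (hUS : Metric.sphere (0 : E n) 1 ⊆ U) (hf : ContDiffOn ℝ 3 f U) :
    ∀ θ ∈ Metric.sphere (0 : E n) 1, ∀ v : E n,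
      sLap (ext0 (fun x => ⟪sgrad f x, v⟫)) θ - ⟪sgrad (ext0 (sLap f)) θ, v⟫ =
        ((n : ℝ) - 3) * ⟪sgrad f θ, v⟫ - 2 * ⟪v, θ⟫ * sLap f θ := by
  intro θ hθ v
  exact sLap_sgrad_commutator_general (by simpa using hθ)
    (hf.contDiffAt (hU.mem_nhds (hUS hθ))) v

end SecondOrderConc
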